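/- Assume the feature vectors {φ(y)}_{y∈Y} are orthonormal, the ground truth reward r_G satisfies the reward structure assumption, and the initial parameters θ_0 satisfy the initial policy assumption (orthonormal case). Let γ := (π_{θ_0}(y_⋆)/M)^{14/13}, suppose θ_t evolves by gradient flow maximizing V_G, assume there is a time at which V_G(θ_t) ≥ r_G(y_med) − γ, and let t_γ be the first such time. Then for all t ∈ [0, t_γ]: d/dt π_{θ_t}(y_⋆) < 0 and d/dt π_{θ_t}(y_med) > 0; moreover min_{t∈[0, t_γ]} π_{θ_t}(y_⋆) = π_{θ_{t_γ}}(y_⋆) ≤ π_{θ_0}(y_med)² γ / (8 A_G(y_⋆; θ_0)). -/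

import Mathlib

open scoped BigOperators RealInnerProductSpace

noncomputable def policy {Y : Type*} [Fintype Y] {D : ℕ}
    (φ : Y → EuclideanSpace ℝ (Fin D)) (θ : EuclideanSpace ℝ (Fin D)) (y : Y) : ℝ :=
  Real.exp ⟪φ y, θ⟫ / ∑ z, Real.exp ⟪φ z, θ⟫

noncomputable def expReward {Y : Type*} [Fintype Y] {D : ℕ}
    (φ : Y → EuclideanSpace ℝ (Fin D)) (r : Y → ℝ) (θ : EuclideanSpace ℝ (Fin D)) : ℝ :=
  ∑ y, policy φ θ y * r y

/-!
For orthonormal features the flow gives `d/dt log π(y) = π(y) A(y) - ∑ z, π(z)² A(z)`. The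
advantage of `ymed` is `π(Ybad) (r ymed - r ybad) - π(ystar) (r ystar - r ymed)`. As long as `ymed`
has most of the mass and the second term is a small fraction of the first, the sum in the
logarithmic derivative is of the order of `A(ymed)`, whence `π(ymed)` increases, `π(ystar)`
decreases, and seven times its logarithmic derivative lies below that of every bad output, so that
`π(ystar) ^ 7 / π(Ybad)` decreases. While the reward gap is at least `γ`, so is `π(Ybad) (r ymed -
r ybad)`, and the bound on that ratio then makes the second term a still smaller fraction of the
first. Hence the flow cannot leave this regime before the gap has shrunk to `γ`, and at that moment
`π(ystar)` is a small fraction of `γ`.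
-/

section RealAnalysis

lemma mapsTo_Icc_of_isOpen_of_forall_Ico {α X : Type*} [LinearOrder α] [TopologicalSpace α]
    [OrderTopology α] [CompactIccSpace α] [TopologicalSpace X] {U : Set X} (hU : IsOpen U)
    {f : α → X} {a b : α} (hf : ContinuousOn f (Set.Icc a b))
    (hstep : ∀ t ∈ Set.Icc a b, Set.MapsTo f (Set.Ico a t) U → f t ∈ U) :
    Set.MapsTo f (Set.Icc a b) U := by
  by_contra! hexit
  obtain ⟨t, ht, htU⟩ : (Set.Icc a b ∩ f ⁻¹' Uᶜ).Nonempty := by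
    simpa [Set.MapsTo, Set.Nonempty, and_assoc] using hexit
  have hcompact : IsCompact (Set.Icc a b ∩ f ⁻¹' Uᶜ) := isCompact_Icc.of_isClosed_subset
    (hf.preimage_isClosed_of_isClosed isClosed_Icc hU.isClosed_compl) Set.inter_subset_left
  obtain ⟨s, ⟨hs, hsU⟩, hmin⟩ := hcompact.exists_isLeast ⟨t, ht, htU⟩
  refine hsU (hstep s hs fun u hu => ?_)
  by_contra huU
  exact (hmin ⟨⟨hu.1, hu.2.le.trans hs.2⟩, huU⟩).not_gt hu.2

lemma antitoneOn_Icc_of_hasDerivAt_nonpos {f f' : ℝ → ℝ} {a b : ℝ}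
    (hf : ∀ t ∈ Set.Icc a b, HasDerivAt f (f' t) t) (hf' : ∀ t ∈ Set.Ioo a b, f' t ≤ 0) :
    AntitoneOn f (Set.Icc a b) := by
  refine antitoneOn_of_hasDerivWithinAt_nonpos (f' := f') (convex_Icc a b)
    (fun t ht => (hf t ht).continuousAt.continuousWithinAt) ?_ ?_ <;> rw [interior_Icc]
  · exact fun t ht => (hf t (Set.Ioo_subset_Icc_self ht)).hasDerivWithinAt
  · exact hf'

lemma le_of_pow_succ_le_pow_mul {R : Type*} [CommRing R] [LinearOrder R] [IsStrictOrderedRing R]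
    {x y c : R} {n : ℕ} (hc : 0 ≤ c) (hcy : c ≤ y) (h : x ^ (n + 1) ≤ c ^ n * y) : x ≤ y :=
  le_of_pow_le_pow_left₀ n.succ_ne_zero (hc.trans hcy) <| calc
    x ^ (n + 1) ≤ c ^ n * y := h
    _ ≤ y ^ n * y :=
      mul_le_mul_of_nonneg_right (pow_le_pow_left₀ hc hcy n) (hc.trans hcy)
    _ = y ^ (n + 1) := (pow_succ y n).symm

end RealAnalysis

/-- The log-partition function `log ∑ z, exp ⟪φ z, θ⟫`, whose gradient is the mean feature and
which turns the softmax policy into a single exponential. -/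
noncomputable def logPartition {Y : Type*} [Fintype Y] {D : ℕ}
    (φ : Y → EuclideanSpace ℝ (Fin D)) (θ : EuclideanSpace ℝ (Fin D)) : ℝ :=
  Real.log (∑ z, Real.exp ⟪φ z, θ⟫)

/-- The advantage `A(y; θ) = r(y) - V(θ)`. -/
noncomputable def advantage {Y : Type*} [Fintype Y] {D : ℕ}
    (φ : Y → EuclideanSpace ℝ (Fin D)) (r : Y → ℝ) (θ : EuclideanSpace ℝ (Fin D)) (y : Y) : ℝ :=
  r y - expReward φ r θ

/-- The policy average of `π(z) A(z)`, which for orthonormal features is the rate at which the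
normalizer of the policy grows along gradient flow. -/
noncomputable def drift {Y : Type*} [Fintype Y] {D : ℕ}
    (φ : Y → EuclideanSpace ℝ (Fin D)) (r : Y → ℝ) (θ : EuclideanSpace ℝ (Fin D)) : ℝ :=
  ∑ z, policy φ θ z ^ 2 * advantage φ r θ z

/-- The derivative of `log π(y)` along gradient flow when the features are orthonormal. -/
noncomputable def growthRate {Y : Type*} [Fintype Y] {D : ℕ}
    (φ : Y → EuclideanSpace ℝ (Fin D)) (r : Y → ℝ) (θ : EuclideanSpace ℝ (Fin D)) (y : Y) : ℝ :=
  policy φ θ y * advantage φ r θ y - drift φ r θ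

/-- The probability `π(s)` of a finite set of outputs. -/
noncomputable def policyMass {Y : Type*} [Fintype Y] {D : ℕ}
    (φ : Y → EuclideanSpace ℝ (Fin D)) (θ : EuclideanSpace ℝ (Fin D)) (s : Finset Y) : ℝ :=
  ∑ y ∈ s, policy φ θ y

section Softmax

variable {Y : Type*} [Fintype Y] {D : ℕ} (φ : Y → EuclideanSpace ℝ (Fin D)) (r : Y → ℝ)
  (θ : EuclideanSpace ℝ (Fin D))

lemma sum_exp_inner_pos [Nonempty Y] : 0 < ∑ z, Real.exp ⟪φ z, θ⟫ :=
  Finset.sum_pos (fun _ _ => Real.exp_pos _) Finset.univ_nonempty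

lemma policy_pos (y : Y) : 0 < policy φ θ y :=
  have : Nonempty Y := ⟨y⟩
  div_pos (Real.exp_pos _) (sum_exp_inner_pos φ θ)

lemma sum_policy [Nonempty Y] : ∑ y, policy φ θ y = 1 := by
  simp only [policy]
  rw [← Finset.sum_div, div_self (sum_exp_inner_pos φ θ).ne']

lemma policy_le_one (y : Y) : policy φ θ y ≤ 1 := by
  have : Nonempty Y := ⟨y⟩
  rw [← sum_policy φ θ]
  exact Finset.single_le_sum (f := policy φ θ) (fun _ _ => (policy_pos φ θ _).le)
    (Finset.mem_univ y)

lemma sum_policy_mul_advantage [Nonempty Y] : ∑ y, policy φ θ y * advantage φ r θ y = 0 := by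
  simp only [advantage, mul_sub, Finset.sum_sub_distrib, ← Finset.sum_mul, sum_policy, one_mul]
  exact sub_self _

lemma policyMass_pos {s : Finset Y} (hs : s.Nonempty) : 0 < policyMass φ θ s :=
  Finset.sum_pos (fun _ _ => policy_pos φ θ _) hs

lemma policy_le_policyMass {s : Finset Y} {y : Y} (hy : y ∈ s) :
    policy φ θ y ≤ policyMass φ θ s :=
  Finset.single_le_sum (f := policy φ θ) (fun _ _ => (policy_pos φ θ _).le) hy

lemma policy_eq_exp_sub_logPartition (y : Y) :
    policy φ θ y = Real.exp (⟪φ y, θ⟫ - logPartition φ θ) := by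
  have : Nonempty Y := ⟨y⟩
  rw [Real.exp_sub, logPartition, Real.exp_log (sum_exp_inner_pos φ θ), policy]

lemma hasGradientAt_logPartition [Nonempty Y] :
    HasGradientAt (logPartition φ) (∑ z, policy φ θ z • φ z) θ := by
  have hsum : HasFDerivAt (fun x => ∑ z, Real.exp ⟪φ z, x⟫)
      (∑ z, Real.exp ⟪φ z, θ⟫ • innerSL ℝ (φ z)) θ :=
    HasFDerivAt.fun_sum fun z _ => ((innerSL ℝ (φ z)).hasFDerivAt (x := θ)).exp
  refine hasGradientAt_iff_hasFDerivAt.2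
    ((hsum.log (sum_exp_inner_pos φ θ).ne').congr_fderiv ?_)
  ext v
  simp [policy, Finset.mul_sum, div_eq_inv_mul, mul_assoc]

lemma hasGradientAt_policy (y : Y) :
    HasGradientAt (fun x => policy φ x y)
      (policy φ θ y • (φ y - ∑ z, policy φ θ z • φ z)) θ := by
  have : Nonempty Y := ⟨y⟩
  simp only [policy_eq_exp_sub_logPartition φ _ y]
  refine hasGradientAt_iff_hasFDerivAt.2 ((((innerSL ℝ (φ y)).hasFDerivAt (x := θ)).sub
    (hasGradientAt_logPartition φ θ).hasFDerivAt).exp.congr_fderiv ?_)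
  ext v
  simp

lemma hasGradientAt_expReward :
    HasGradientAt (expReward φ r) (∑ y, (policy φ θ y * advantage φ r θ y) • φ y) θ := by
  have hsum : HasFDerivAt (expReward φ r) _ θ := HasFDerivAt.fun_sum (u := Finset.univ)
    fun y _ => (hasGradientAt_policy φ θ y).hasFDerivAt.mul_const (r y)
  refine hasGradientAt_iff_hasFDerivAt.2 (hsum.congr_fderiv ?_)
  simp only [← map_smul, ← map_sum]
  congr 1
  calc ∑ y, r y • policy φ θ y • (φ y - ∑ z, policy φ θ z • φ z)
      = ∑ y, (r y * policy φ θ y) • φ y - expReward φ r θ • ∑ z, policy φ θ z • φ z := by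
        simp only [smul_sub, smul_smul, Finset.sum_sub_distrib, ← Finset.sum_smul, expReward,
          mul_comm]
    _ = ∑ y, (policy φ θ y * advantage φ r θ y) • φ y := by
        simp only [advantage, mul_sub, sub_smul, Finset.sum_sub_distrib, Finset.smul_sum, smul_smul,
          mul_comm]

lemma continuous_policy (y : Y) : Continuous fun x => policy φ x y :=
  continuous_iff_continuousAt.2 fun x => (hasGradientAt_policy φ x y).continuousAt

lemma continuous_expReward : Continuous (expReward φ r) :=
  continuous_iff_continuousAt.2 fun x => (hasGradientAt_expReward φ r x).continuousAt

variable {φ r}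

-- Orthonormality makes the flow act on the logits separately: `⟪φ y, θ⟫' = π(y) A(y)`.
lemma hasDerivAt_policy_of_gradientFlow (hφ : Orthonormal ℝ φ)
    {θt : ℝ → EuclideanSpace ℝ (Fin D)} {t : ℝ}
    (hflow : HasDerivAt θt (gradient (expReward φ r) (θt t)) t) (y : Y) :
    HasDerivAt (fun τ => policy φ (θt τ) y)
      (policy φ (θt t) y * growthRate φ r (θt t) y) t := by
  classical
  have hlogit (z : Y) : ⟪φ z, gradient (expReward φ r) (θt t)⟫
      = policy φ (θt t) z * advantage φ r (θt t) z := by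
    rw [(hasGradientAt_expReward φ r (θt t)).gradient]
    exact hφ.inner_right_fintype _ z
  refine ((hasGradientAt_policy φ (θt t) y).hasFDerivAt.comp_hasDerivAt t hflow).congr_deriv ?_
  simp only [InnerProductSpace.toDual_apply_apply, real_inner_smul_left, inner_sub_left, sum_inner,
    hlogit, growthRate, drift, pow_two, mul_assoc]

end Softmax

/-- The reward takes three values `r ystar > r ymed > r ybad`, attained on `ystar`, on `ymed` and
on all of `Ybad ∋ ybad` respectively. -/
structure IsThreeLevelReward {Y : Type*} (r : Y → ℝ) (ystar ymed ybad : Y) (Ybad : Finset Y) :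
    Prop where
  mem_bad : ybad ∈ Ybad
  star_ne_med : ystar ≠ ymed
  star_notMem : ystar ∉ Ybad
  med_notMem : ymed ∉ Ybad
  cover : ∀ y, y = ystar ∨ y = ymed ∨ y ∈ Ybad
  eq_bad : ∀ y ∈ Ybad, r y = r ybad
  bad_lt_med : r ybad < r ymed
  med_lt_star : r ymed < r ystar

/-- The parameters at which most of the probability sits on `ymed` and at which, in the
decomposition `A(ymed) = π(Ybad) (r ymed - r ybad) - π(ystar) (r ystar - r ymed)`, the contribution
of `ystar` is a small fraction of that of `Ybad`. There the flow is attracted to `ymed`. -/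
def attractionRegion {Y : Type*} [Fintype Y] {D : ℕ} (φ : Y → EuclideanSpace ℝ (Fin D))
    (r : Y → ℝ) (ystar ymed ybad : Y) (Ybad : Finset Y) : Set (EuclideanSpace ℝ (Fin D)) :=
  {θ | 10 * (policy φ θ ystar * (r ystar - r ymed)) < policyMass φ θ Ybad * (r ymed - r ybad) ∧
    17 / 20 < policy φ θ ymed}

/-- The ratio `π(ystar) ^ 7 / π(Ybad)`, which decreases along the flow in the attraction region. -/
noncomputable def starBadRatio {Y : Type*} [Fintype Y] {D : ℕ}
    (φ : Y → EuclideanSpace ℝ (Fin D)) (ystar : Y) (Ybad : Finset Y)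
    (θ : EuclideanSpace ℝ (Fin D)) : ℝ :=
  policy φ θ ystar ^ 7 / policyMass φ θ Ybad

lemma isOpen_attractionRegion {Y : Type*} [Fintype Y] {D : ℕ} (φ : Y → EuclideanSpace ℝ (Fin D))
    (r : Y → ℝ) (ystar ymed ybad : Y) (Ybad : Finset Y) :
    IsOpen (attractionRegion φ r ystar ymed ybad Ybad) := by
  have hmass : Continuous fun θ => policyMass φ θ Ybad :=
    continuous_finsetSum _ fun y _ => continuous_policy φ y
  exact (isOpen_lt (continuous_const.mul ((continuous_policy φ ystar).mul continuous_const))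
    (hmass.mul continuous_const)).inter (isOpen_lt continuous_const (continuous_policy φ ymed))

namespace IsThreeLevelReward

variable {Y : Type*} [Fintype Y] {D : ℕ} {r : Y → ℝ} {ystar ymed ybad : Y} {Ybad : Finset Y}
  (φ : Y → EuclideanSpace ℝ (Fin D)) (θ : EuclideanSpace ℝ (Fin D))

lemma sum_eq (hr : IsThreeLevelReward r ystar ymed ybad Ybad) (f : Y → ℝ) :
    ∑ y, f y = f ystar + f ymed + ∑ y ∈ Ybad, f y := by
  classical
  have huniv : Finset.univ = insert ystar (insert ymed Ybad) := by
    ext y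
    simpa using hr.cover y
  rw [huniv, Finset.sum_insert (by simp [hr.star_ne_med, hr.star_notMem]),
    Finset.sum_insert hr.med_notMem, add_assoc]

lemma policyMass_bad_pos (hr : IsThreeLevelReward r ystar ymed ybad Ybad) :
    0 < policyMass φ θ Ybad :=
  policyMass_pos φ θ ⟨ybad, hr.mem_bad⟩

lemma policy_add_policy_add_policyMass (hr : IsThreeLevelReward r ystar ymed ybad Ybad) :
    policy φ θ ystar + policy φ θ ymed + policyMass φ θ Ybad = 1 := by
  have : Nonempty Y := ⟨ystar⟩
  rw [policyMass, ← hr.sum_eq, sum_policy]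

lemma advantage_eq_bad (hr : IsThreeLevelReward r ystar ymed ybad Ybad) {y : Y} (hy : y ∈ Ybad) :
    advantage φ r θ y = advantage φ r θ ybad := by
  rw [advantage, hr.eq_bad y hy, advantage]

lemma sum_policy_mul_advantage_eq_zero (hr : IsThreeLevelReward r ystar ymed ybad Ybad) :
    policy φ θ ystar * advantage φ r θ ystar + policy φ θ ymed * advantage φ r θ ymed
      + policyMass φ θ Ybad * advantage φ r θ ybad = 0 := by
  have : Nonempty Y := ⟨ystar⟩
  rw [← sum_policy_mul_advantage φ r θ, hr.sum_eq, policyMass, Finset.sum_mul]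
  exact congrArg _ (Finset.sum_congr rfl fun y hy => by rw [hr.advantage_eq_bad φ θ hy])

lemma advantage_med_eq (hr : IsThreeLevelReward r ystar ymed ybad Ybad) :
    advantage φ r θ ymed = policyMass φ θ Ybad * (r ymed - r ybad)
      - policy φ θ ystar * (r ystar - r ymed) := by
  have hzero := hr.sum_policy_mul_advantage_eq_zero φ θ
  have hone := hr.policy_add_policy_add_policyMass φ θ
  simp only [advantage] at hzero ⊢
  linear_combination hzero + (expReward φ r θ - r ymed) * hone

lemma advantage_bad_neg (hr : IsThreeLevelReward r ystar ymed ybad Ybad) :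
    advantage φ r θ ybad < 0 := by
  have hzero := hr.sum_policy_mul_advantage_eq_zero φ θ
  have hone := hr.policy_add_policy_add_policyMass φ θ
  have hmed := mul_pos (policy_pos φ θ ymed) (sub_pos.2 hr.bad_lt_med)
  have hstar := mul_pos (policy_pos φ θ ystar) (sub_pos.2 (hr.bad_lt_med.trans hr.med_lt_star))
  have heq : advantage φ r θ ybad
      = -(policy φ θ ymed * (r ymed - r ybad) + policy φ θ ystar * (r ystar - r ybad)) := by
    simp only [advantage] at hzero ⊢
    linear_combination hzero + (expReward φ r θ - r ybad) * hone
  linarith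

lemma advantage_star_pos (hr : IsThreeLevelReward r ystar ymed ybad Ybad) :
    0 < advantage φ r θ ystar := by
  have hzero := hr.sum_policy_mul_advantage_eq_zero φ θ
  have hone := hr.policy_add_policy_add_policyMass φ θ
  have hmed := mul_pos (policy_pos φ θ ymed) (sub_pos.2 hr.med_lt_star)
  have hbad := mul_pos (hr.policyMass_bad_pos φ θ)
    (sub_pos.2 (hr.bad_lt_med.trans hr.med_lt_star))
  have heq : advantage φ r θ ystar
      = policy φ θ ymed * (r ystar - r ymed) + policyMass φ θ Ybad * (r ystar - r ybad) := by
    simp only [advantage] at hzero ⊢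
    linear_combination hzero + (expReward φ r θ - r ystar) * hone
  linarith

lemma drift_eq (hr : IsThreeLevelReward r ystar ymed ybad Ybad) :
    drift φ r θ = policy φ θ ystar ^ 2 * advantage φ r θ ystar
      + policy φ θ ymed ^ 2 * advantage φ r θ ymed
      + (∑ y ∈ Ybad, policy φ θ y ^ 2) * advantage φ r θ ybad := by
  rw [drift, hr.sum_eq, Finset.sum_mul]
  exact congrArg _ (Finset.sum_congr rfl fun y hy => by rw [hr.advantage_eq_bad φ θ hy])

lemma drift_le (hr : IsThreeLevelReward r ystar ymed ybad Ybad) :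
    drift φ r θ ≤ policy φ θ ystar ^ 2 * advantage φ r θ ystar
      + policy φ θ ymed ^ 2 * advantage φ r θ ymed := by
  have hbad : (∑ y ∈ Ybad, policy φ θ y ^ 2) * advantage φ r θ ybad ≤ 0 :=
    mul_nonpos_of_nonneg_of_nonpos (Finset.sum_nonneg fun _ _ => sq_nonneg _)
      (hr.advantage_bad_neg φ θ).le
  linarith [hr.drift_eq φ θ]

lemma le_drift (hr : IsThreeLevelReward r ystar ymed ybad Ybad) :
    policy φ θ ystar ^ 2 * advantage φ r θ ystar + policy φ θ ymed ^ 2 * advantage φ r θ ymed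
      + policyMass φ θ Ybad ^ 2 * advantage φ r θ ybad ≤ drift φ r θ := by
  have hsq : ∑ y ∈ Ybad, policy φ θ y ^ 2 ≤ policyMass φ θ Ybad ^ 2 :=
    Finset.sum_sq_le_sq_sum_of_nonneg fun y _ => (policy_pos φ θ y).le
  rw [hr.drift_eq φ θ]
  exact add_le_add_right (mul_le_mul_of_nonpos_right hsq (hr.advantage_bad_neg φ θ).le) _

variable {φ θ}

lemma policy_star_add_policyMass_bad_lt (hr : IsThreeLevelReward r ystar ymed ybad Ybad)
    (hθ : θ ∈ attractionRegion φ r ystar ymed ybad Ybad) :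
    policy φ θ ystar + policyMass φ θ Ybad < 3 / 20 := by
  linarith [hθ.2, hr.policy_add_policy_add_policyMass φ θ]

lemma advantage_med_pos (hr : IsThreeLevelReward r ystar ymed ybad Ybad)
    (hθ : θ ∈ attractionRegion φ r ystar ymed ybad Ybad) : 0 < advantage φ r θ ymed := by
  have hstar := mul_pos (policy_pos φ θ ystar) (sub_pos.2 hr.med_lt_star)
  linarith [hθ.1, hr.advantage_med_eq φ θ]

lemma policy_mul_advantage_star_le (hr : IsThreeLevelReward r ystar ymed ybad Ybad)
    (hθ : θ ∈ attractionRegion φ r ystar ymed ybad Ybad) :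
    policy φ θ ystar * advantage φ r θ ystar ≤ 27 / 100 * advantage φ r θ ymed := by
  have hgap : 9 * (policy φ θ ystar * (r ystar - r ymed)) ≤ advantage φ r θ ymed := by
    linarith [hθ.1, hr.advantage_med_eq φ θ]
  have hsmall : policy φ θ ystar * advantage φ r θ ymed ≤ 3 / 20 * advantage φ r θ ymed :=
    mul_le_mul_of_nonneg_right
      (by linarith [hr.policy_star_add_policyMass_bad_lt hθ, hr.policyMass_bad_pos φ θ])
      (hr.advantage_med_pos hθ).le
  have hsplit : policy φ θ ystar * advantage φ r θ ystar
      = policy φ θ ystar * advantage φ r θ ymed + policy φ θ ystar * (r ystar - r ymed) := by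
    simp only [advantage]
    ring
  linarith [hr.advantage_med_pos hθ]

lemma le_drift_of_mem_attractionRegion (hr : IsThreeLevelReward r ystar ymed ybad Ybad)
    (hθ : θ ∈ attractionRegion φ r ystar ymed ybad Ybad) :
    11 / 20 * advantage φ r θ ymed ≤ drift φ r θ := by
  have hmed := hr.advantage_med_pos hθ
  have hp := policy_pos φ θ ystar
  have hb := hr.policyMass_bad_pos φ θ
  have hpb := hr.policy_star_add_policyMass_bad_lt hθ
  have hstar : 0 ≤ policy φ θ ystar ^ 2 * advantage φ r θ ystar :=
    mul_nonneg (sq_nonneg _) (hr.advantage_star_pos φ θ).le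
  have hqq : 119 / 200 ≤ policy φ θ ymed * (policy φ θ ymed - policyMass φ θ Ybad) := by
    nlinarith [hθ.2]
  have hbstar : policyMass φ θ Ybad * (policy φ θ ystar * advantage φ r θ ystar)
      ≤ 3 / 20 * (27 / 100 * advantage φ r θ ymed) :=
    mul_le_mul (by linarith) (hr.policy_mul_advantage_star_le hθ)
      (mul_pos hp (hr.advantage_star_pos φ θ)).le (by norm_num)
  -- The zero mean of the advantage trades its value on `Ybad` for those on `ystar` and `ymed`.
  have hbad : policyMass φ θ Ybad ^ 2 * advantage φ r θ ybad
      = -(policyMass φ θ Ybad * (policy φ θ ystar * advantage φ r θ ystar)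
        + policyMass φ θ Ybad * policy φ θ ymed * advantage φ r θ ymed) := by
    linear_combination policyMass φ θ Ybad * hr.sum_policy_mul_advantage_eq_zero φ θ
  nlinarith [hr.le_drift φ θ, mul_le_mul_of_nonneg_right hqq hmed.le]

lemma growthRate_star_neg (hr : IsThreeLevelReward r ystar ymed ybad Ybad)
    (hθ : θ ∈ attractionRegion φ r ystar ymed ybad Ybad) : growthRate φ r θ ystar < 0 := by
  rw [growthRate]
  linarith [hr.policy_mul_advantage_star_le hθ, hr.le_drift_of_mem_attractionRegion hθ,
    hr.advantage_med_pos hθ]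

lemma growthRate_med_pos (hr : IsThreeLevelReward r ystar ymed ybad Ybad)
    (hθ : θ ∈ attractionRegion φ r ystar ymed ybad Ybad) : 0 < growthRate φ r θ ymed := by
  have hmed := hr.advantage_med_pos hθ
  have hp := policy_pos φ θ ystar
  have hsum := hr.policy_add_policy_add_policyMass φ θ
  have hpq : policy φ θ ystar ≤ 1 - policy φ θ ymed := by
    linarith [hr.policyMass_bad_pos φ θ]
  have hstar : policy φ θ ystar * (policy φ θ ystar * advantage φ r θ ystar)
      ≤ policy φ θ ystar * (27 / 100 * advantage φ r θ ymed) :=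
    mul_le_mul_of_nonneg_left (hr.policy_mul_advantage_star_le hθ) hp.le
  have hgain : 17 / 20 * (policy φ θ ystar * advantage φ r θ ymed)
      ≤ policy φ θ ymed * ((1 - policy φ θ ymed) * advantage φ r θ ymed) :=
    mul_le_mul hθ.2.le (mul_le_mul_of_nonneg_right hpq hmed.le) (mul_pos hp hmed).le
      (policy_pos φ θ ymed).le
  rw [growthRate]
  nlinarith [hr.drift_le φ θ, mul_pos hp hmed]

lemma seven_mul_growthRate_star_le (hr : IsThreeLevelReward r ystar ymed ybad Ybad)
    (hθ : θ ∈ attractionRegion φ r ystar ymed ybad Ybad) {y : Y} (hy : y ∈ Ybad) :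
    7 * growthRate φ r θ ystar ≤ growthRate φ r θ y := by
  have hmed := hr.advantage_med_pos hθ
  have hq : policy φ θ ymed * advantage φ r θ ymed ≤ 1 * advantage φ r θ ymed :=
    mul_le_mul_of_nonneg_right (policy_le_one φ θ ymed) hmed.le
  have hbad : policyMass φ θ Ybad * advantage φ r θ ybad ≤ policy φ θ y * advantage φ r θ ybad :=
    mul_le_mul_of_nonpos_right (policy_le_policyMass φ θ hy) (hr.advantage_bad_neg φ θ).le
  rw [growthRate, growthRate, hr.advantage_eq_bad φ θ hy]
  linarith [hr.policy_mul_advantage_star_le hθ, hr.le_drift_of_mem_attractionRegion hθ,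
    hr.sum_policy_mul_advantage_eq_zero φ θ]

end IsThreeLevelReward

namespace IsThreeLevelReward

variable {Y : Type*} [Fintype Y] {D : ℕ} {φ : Y → EuclideanSpace ℝ (Fin D)} {r : Y → ℝ}
  {ystar ymed ybad : Y} {Ybad : Finset Y} {θ : EuclideanSpace ℝ (Fin D)}
  {θt : ℝ → EuclideanSpace ℝ (Fin D)} {γ T : ℝ}

lemma antitoneOn_policy_star (hr : IsThreeLevelReward r ystar ymed ybad Ybad)
    (hφ : Orthonormal ℝ φ)
    (hflow : ∀ t ∈ Set.Icc 0 T, HasDerivAt θt (gradient (expReward φ r) (θt t)) t)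
    (hregion : Set.MapsTo θt (Set.Ico 0 T) (attractionRegion φ r ystar ymed ybad Ybad)) :
    AntitoneOn (fun t => policy φ (θt t) ystar) (Set.Icc 0 T) :=
  antitoneOn_Icc_of_hasDerivAt_nonpos
    (fun t ht => hasDerivAt_policy_of_gradientFlow hφ (hflow t ht) ystar)
    fun _ ht => mul_nonpos_of_nonneg_of_nonpos (policy_pos φ _ ystar).le
      (hr.growthRate_star_neg (hregion (Set.Ioo_subset_Ico_self ht))).le

lemma monotoneOn_policy_med (hr : IsThreeLevelReward r ystar ymed ybad Ybad)
    (hφ : Orthonormal ℝ φ)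
    (hflow : ∀ t ∈ Set.Icc 0 T, HasDerivAt θt (gradient (expReward φ r) (θt t)) t)
    (hregion : Set.MapsTo θt (Set.Ico 0 T) (attractionRegion φ r ystar ymed ybad Ybad)) :
    MonotoneOn (fun t => policy φ (θt t) ymed) (Set.Icc 0 T) := by
  refine neg_neg (fun t => policy φ (θt t) ymed) ▸
    (antitoneOn_Icc_of_hasDerivAt_nonpos
      (fun t ht => (hasDerivAt_policy_of_gradientFlow hφ (hflow t ht) ymed).neg) fun t ht => ?_).neg
  exact neg_nonpos.2 (mul_pos (policy_pos φ _ ymed)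
    (hr.growthRate_med_pos (hregion (Set.Ioo_subset_Ico_self ht)))).le

lemma antitoneOn_starBadRatio (hr : IsThreeLevelReward r ystar ymed ybad Ybad)
    (hφ : Orthonormal ℝ φ)
    (hflow : ∀ t ∈ Set.Icc 0 T, HasDerivAt θt (gradient (expReward φ r) (θt t)) t)
    (hregion : Set.MapsTo θt (Set.Ico 0 T) (attractionRegion φ r ystar ymed ybad Ybad)) :
    AntitoneOn (fun t => starBadRatio φ ystar Ybad (θt t)) (Set.Icc 0 T) := by
  have hderiv {t : ℝ} (ht : t ∈ Set.Icc 0 T) (y : Y) :=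
    hasDerivAt_policy_of_gradientFlow hφ (hflow t ht) y
  refine antitoneOn_Icc_of_hasDerivAt_nonpos (fun t ht => ((hderiv ht ystar).pow 7).div
    (HasDerivAt.fun_sum fun y (_ : y ∈ Ybad) => hderiv ht y)
    (hr.policyMass_bad_pos φ (θt t)).ne') fun t ht => ?_
  have hbad : policyMass φ (θt t) Ybad * (7 * growthRate φ r (θt t) ystar)
      ≤ ∑ y ∈ Ybad, policy φ (θt t) y * growthRate φ r (θt t) y := by
    rw [policyMass, Finset.sum_mul]
    exact Finset.sum_le_sum fun y hy => mul_le_mul_of_nonneg_left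
      (hr.seven_mul_growthRate_star_le (hregion (Set.Ioo_subset_Ico_self ht)) hy)
      (policy_pos φ _ y).le
  refine div_nonpos_of_nonpos_of_nonneg ?_ (sq_nonneg _)
  have hpow := mul_le_mul_of_nonneg_left hbad (pow_pos (policy_pos φ (θt t) ystar) 7).le
  simp only [Pi.pow_apply]
  push_cast
  linarith

-- The exponent `7` of the ratio leaves a factor `γ ^ 6`, which is absorbed by the reward gap `γ`.
lemma twenty_mul_policy_star_le (hr : IsThreeLevelReward r ystar ymed ybad Ybad) (hγ : 0 ≤ γ)
    (hgap : expReward φ r θ ≤ r ymed - γ)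
    (hratio : starBadRatio φ ystar Ybad θ * (20 * (r ystar - r ybad)) ^ 7
      ≤ γ ^ 6 * (r ymed - r ybad)) :
    20 * (policy φ θ ystar * (r ystar - r ybad)) ≤ policyMass φ θ Ybad * (r ymed - r ybad) := by
  have hb := hr.policyMass_bad_pos φ θ
  have hγb : γ ≤ policyMass φ θ Ybad * (r ymed - r ybad) := by
    have hmed := hr.advantage_med_eq φ θ
    rw [advantage] at hmed
    linarith [mul_pos (policy_pos φ θ ystar) (sub_pos.2 hr.med_lt_star)]
  refine le_of_pow_succ_le_pow_mul (n := 6) hγ hγb ?_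
  calc (20 * (policy φ θ ystar * (r ystar - r ybad))) ^ 7
      = policyMass φ θ Ybad * (starBadRatio φ ystar Ybad θ * (20 * (r ystar - r ybad)) ^ 7) := by
        rw [starBadRatio]
        field_simp
    _ ≤ policyMass φ θ Ybad * (γ ^ 6 * (r ymed - r ybad)) := mul_le_mul_of_nonneg_left hratio hb.le
    _ = γ ^ 6 * (policyMass φ θ Ybad * (r ymed - r ybad)) := mul_left_comm _ _ _

lemma mapsTo_attractionRegion (hr : IsThreeLevelReward r ystar ymed ybad Ybad)
    (hφ : Orthonormal ℝ φ)
    (hflow : ∀ t ∈ Set.Icc 0 T, HasDerivAt θt (gradient (expReward φ r) (θt t)) t) (hγ : 0 ≤ γ)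
    (hgap : ∀ t ∈ Set.Icc 0 T, expReward φ r (θt t) ≤ r ymed - γ)
    (hmed : 17 / 20 < policy φ (θt 0) ymed)
    (hratio : starBadRatio φ ystar Ybad (θt 0) * (20 * (r ystar - r ybad)) ^ 7
      ≤ γ ^ 6 * (r ymed - r ybad)) :
    Set.MapsTo θt (Set.Icc 0 T) (attractionRegion φ r ystar ymed ybad Ybad) := by
  have hΔ : 0 < r ystar - r ybad := sub_pos.2 (hr.bad_lt_med.trans hr.med_lt_star)
  refine mapsTo_Icc_of_isOpen_of_forall_Ico (isOpen_attractionRegion φ r ystar ymed ybad Ybad)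
    (fun t ht => (hflow t ht).continuousAt.continuousWithinAt) fun s hs hregion => ?_
  have hflow_s : ∀ t ∈ Set.Icc 0 s, HasDerivAt θt (gradient (expReward φ r) (θt t)) t :=
    fun t ht => hflow t ⟨ht.1, ht.2.trans hs.2⟩
  have h0 : (0 : ℝ) ∈ Set.Icc 0 s := Set.left_mem_Icc.2 hs.1
  have hss : s ∈ Set.Icc 0 s := Set.right_mem_Icc.2 hs.1
  have hratio_s := (mul_le_mul_of_nonneg_right
    (hr.antitoneOn_starBadRatio hφ hflow_s hregion h0 hss hs.1) (by positivity)).trans hratio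
  have hstar := hr.twenty_mul_policy_star_le hγ (hgap s hs) hratio_s
  have hp := policy_pos φ (θt s) ystar
  refine ⟨?_, hmed.trans_le (hr.monotoneOn_policy_med hφ hflow_s hregion h0 hss hs.1)⟩
  linarith [mul_pos hp (sub_pos.2 hr.bad_lt_med), mul_pos hp (sub_pos.2 hr.med_lt_star)]

lemma policy_star_mul_le (hr : IsThreeLevelReward r ystar ymed ybad Ybad)
    (hreach : r ymed - γ ≤ expReward φ r θ)
    (hstar : 20 * (policy φ θ ystar * (r ystar - r ybad))
      ≤ policyMass φ θ Ybad * (r ymed - r ybad)) :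
    19 * (policy φ θ ystar * (r ystar - r ybad)) ≤ γ := by
  have hmed := hr.advantage_med_eq φ θ
  rw [advantage] at hmed
  linarith [mul_pos (policy_pos φ θ ystar) (sub_pos.2 hr.bad_lt_med)]

lemma policy_star_le_div (hr : IsThreeLevelReward r ystar ymed ybad Ybad) (hγ : 0 ≤ γ)
    {θ₀ : EuclideanSpace ℝ (Fin D)} (hmed : 17 / 20 < policy φ θ₀ ymed)
    (hstar : 19 * (policy φ θ ystar * (r ystar - r ybad)) ≤ γ) :
    policy φ θ ystar ≤ policy φ θ₀ ymed ^ 2 * γ / (8 * (r ystar - expReward φ r θ₀)) := by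
  have hadv : 0 < r ystar - expReward φ r θ₀ := hr.advantage_star_pos φ θ₀
  have hbad : r ybad - expReward φ r θ₀ < 0 := hr.advantage_bad_neg φ θ₀
  have hle : policy φ θ ystar * (r ystar - expReward φ r θ₀)
      ≤ policy φ θ ystar * (r ystar - r ybad) :=
    mul_le_mul_of_nonneg_left (by linarith) (policy_pos φ θ ystar).le
  have hsq : (17 / 20) ^ 2 * γ ≤ policy φ θ₀ ymed ^ 2 * γ := by gcongr
  rw [le_div_iff₀ (by positivity)]
  linarith

end IsThreeLevelReward

lemma expReward_le_of_first_reach {Y : Type*} [Fintype Y] {D : ℕ}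
    {φ : Y → EuclideanSpace ℝ (Fin D)} {r : Y → ℝ} {θt : ℝ → EuclideanSpace ℝ (Fin D)}
    {v T : ℝ} (hθt : ContinuousOn θt (Set.Icc 0 T)) (hstart : expReward φ r (θt 0) ≤ v)
    (hfirst : ∀ t, 0 ≤ t → v ≤ expReward φ r (θt t) → T ≤ t) :
    ∀ t ∈ Set.Icc 0 T, expReward φ r (θt t) ≤ v := by
  intro t ht
  have hbefore : ∀ s ∈ Set.Ico 0 T, expReward φ r (θt s) ≤ v :=
    fun s hs => le_of_not_ge fun h => (hfirst s hs.1 h).not_gt hs.2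
  rcases (ht.1.trans ht.2).eq_or_lt with rfl | hT
  · rwa [le_antisymm ht.2 ht.1]
  · rw [← closure_Ico hT.ne] at ht hθt
    exact ((continuous_expReward φ r).comp_continuousOn hθt t ht |>.mono subset_closure).closure_le
      ht continuousWithinAt_const hbefore

theorem monotonic_attraction_of_starBadRatio_le {Y : Type*} [Fintype Y] {D : ℕ}
    {φ : Y → EuclideanSpace ℝ (Fin D)} (hφ : Orthonormal ℝ φ)
    {r : Y → ℝ} {ystar ymed ybad : Y} {Ybad : Finset Y}
    (hr : IsThreeLevelReward r ystar ymed ybad Ybad)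
    {θt : ℝ → EuclideanSpace ℝ (Fin D)} {γ tγ : ℝ} (hγ : 0 ≤ γ)
    (hflow : ∀ t ∈ Set.Icc 0 tγ, HasDerivAt θt (gradient (expReward φ r) (θt t)) t)
    (hstart : expReward φ r (θt 0) ≤ r ymed - γ)
    (hmed : 17 / 20 < policy φ (θt 0) ymed)
    (hratio : starBadRatio φ ystar Ybad (θt 0) * (20 * (r ystar - r ybad)) ^ 7
      ≤ γ ^ 6 * (r ymed - r ybad))
    (htγ : 0 ≤ tγ) (hreach : r ymed - γ ≤ expReward φ r (θt tγ))
    (hfirst : ∀ t, 0 ≤ t → r ymed - γ ≤ expReward φ r (θt t) → tγ ≤ t) :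
    (∀ t ∈ Set.Icc (0 : ℝ) tγ,
        (∃ d : ℝ, HasDerivAt (fun τ => policy φ (θt τ) ystar) d t ∧ d < 0)
        ∧ ∃ d : ℝ, HasDerivAt (fun τ => policy φ (θt τ) ymed) d t ∧ 0 < d)
    ∧ (∀ t ∈ Set.Icc (0 : ℝ) tγ, policy φ (θt tγ) ystar ≤ policy φ (θt t) ystar)
    ∧ policy φ (θt tγ) ystar
        ≤ policy φ (θt 0) ymed ^ 2 * γ / (8 * (r ystar - expReward φ r (θt 0))) := by
  have hgap := expReward_le_of_first_reach
    (fun t ht => (hflow t ht).continuousAt.continuousWithinAt) hstart hfirst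
  have hregion := hr.mapsTo_attractionRegion hφ hflow hγ hgap hmed hratio
  have hregion' := hregion.mono_left Set.Ico_subset_Icc_self
  have h0 : (0 : ℝ) ∈ Set.Icc 0 tγ := Set.left_mem_Icc.2 htγ
  have hend : tγ ∈ Set.Icc 0 tγ := Set.right_mem_Icc.2 htγ
  refine ⟨fun t ht => ⟨⟨_, hasDerivAt_policy_of_gradientFlow hφ (hflow t ht) ystar, ?_⟩,
    ⟨_, hasDerivAt_policy_of_gradientFlow hφ (hflow t ht) ymed, ?_⟩⟩,
    fun t ht => hr.antitoneOn_policy_star hφ hflow hregion' ht hend ht.2, ?_⟩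
  · exact mul_neg_of_pos_of_neg (policy_pos φ _ ystar) (hr.growthRate_star_neg (hregion ht))
  · exact mul_pos (policy_pos φ _ ymed) (hr.growthRate_med_pos (hregion ht))
  · have hΔ : 0 < r ystar - r ybad := sub_pos.2 (hr.bad_lt_med.trans hr.med_lt_star)
    have hratio_end := (mul_le_mul_of_nonneg_right
      (hr.antitoneOn_starBadRatio hφ hflow hregion' h0 hend htγ) (by positivity)).trans hratio
    exact hr.policy_star_le_div hγ hmed <| hr.policy_star_mul_le hreach <|
      hr.twenty_mul_policy_star_le hγ (hgap tγ hend) hratio_end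

section InitialCondition

variable {M Δ1 Δ2 b p u : ℝ}

lemma pow_seven_lt_one_tenth (hu : u ^ 14 < 1 / 100) : u ^ 7 < 1 / 10 :=
  lt_of_pow_lt_pow_left₀ 2 (by norm_num) (by linarith [pow_mul u 7 2])

lemma pow_six_lt_one_half (hu0 : 0 ≤ u) (hu : u ^ 14 < 1 / 100) : u ^ 6 < 1 / 2 := by
  refine lt_of_pow_lt_pow_left₀ 7 (by norm_num) ?_
  calc (u ^ 6) ^ 7 = (u ^ 7) ^ 6 := by ring
    _ < (1 / 10) ^ 6 := pow_lt_pow_left₀ (pow_seven_lt_one_tenth hu) (by positivity) (by norm_num)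
    _ < (1 / 2) ^ 7 := by norm_num

lemma initial_star_add_bad_lt (hu0 : 0 ≤ u) (hu : u ^ 14 < 1 / 100) (hM : M ≤ 1)
    (hb : b ≤ 1 / 10) : M * u ^ 13 + b < 3 / 20 := by
  have hprod : u ^ 7 * u ^ 6 < 1 / 10 * (1 / 2) :=
    mul_lt_mul'' (pow_seven_lt_one_tenth hu) (pow_six_lt_one_half hu0 hu) (by positivity)
      (by positivity)
  have hscale : M * u ^ 13 ≤ u ^ 13 := mul_le_of_le_one_left (by positivity) hM
  linarith [pow_add u 7 6]

lemma initial_gap_le (hu0 : 0 ≤ u) (hu : u ^ 14 < 1 / 100) (hMΔ : 20 * (M * Δ1) ≤ 1)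
    (hb : 2 * u ^ 7 ≤ b * Δ2) : u ^ 14 ≤ b * Δ2 - M * u ^ 13 * Δ1 := by
  have hu7 : 0 ≤ u ^ 7 := by positivity
  have hγ : u ^ 7 * u ^ 7 ≤ u ^ 7 * (1 / 10) :=
    mul_le_mul_of_nonneg_left (pow_seven_lt_one_tenth hu).le hu7
  have hp : u ^ 7 * u ^ 6 ≤ u ^ 7 * (1 / 2) :=
    mul_le_mul_of_nonneg_left (pow_six_lt_one_half hu0 hu).le hu7
  have hstar : 20 * (M * Δ1) * u ^ 13 ≤ 1 * u ^ 13 :=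
    mul_le_mul_of_nonneg_right hMΔ (by positivity)
  linarith

lemma initial_ratio_le {S : ℝ} (hu0 : 0 ≤ u) (hMS0 : 0 ≤ M * S) (hMS : 20 * (M * S) ≤ 1)
    (hb0 : 0 < b) (hb : 2 * u ^ 7 ≤ b * Δ2) :
    (M * u ^ 13) ^ 7 / b * (20 * S) ^ 7 ≤ (u ^ 14) ^ 6 * Δ2 := by
  have hu7 : u ^ 7 ≤ b * Δ2 := by linarith [pow_nonneg hu0 7]
  rw [div_mul_eq_mul_div, div_le_iff₀ hb0]
  calc (M * u ^ 13) ^ 7 * (20 * S) ^ 7 = (20 * (M * S)) ^ 7 * (u ^ 84 * u ^ 7) := by ring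
    _ ≤ 1 * (u ^ 84 * (b * Δ2)) := by
      gcongr
      exact pow_le_one₀ (by positivity) hMS
    _ = (u ^ 14) ^ 6 * Δ2 * b := by ring

-- With `u = (p / M) ^ (1 / 13)` the fractional powers of the initial policy assumption become
-- natural powers of `u`.
lemma exists_pow_of_initial_bounds (hM : 0 < M) (hp : 0 ≤ p) (hΔ2 : 0 < Δ2)
    (hstar : p < M * (1 / 100) ^ ((13 : ℝ) / 14))
    (hbad : 2 * p ^ ((7 : ℝ) / 13) / (Δ2 * M ^ ((7 : ℝ) / 13)) ≤ b) :
    ∃ u, 0 ≤ u ∧ u ^ 14 < 1 / 100 ∧ p = M * u ^ 13 ∧ (p / M) ^ ((14 : ℝ) / 13) = u ^ 14 ∧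
      2 * u ^ 7 ≤ b * Δ2 := by
  have hx : 0 ≤ p / M := by positivity
  have hpow (n : ℕ) [n.AtLeastTwo] :
      (p / M) ^ ((OfNat.ofNat n : ℝ) / 13) = ((p / M) ^ ((1 : ℝ) / 13)) ^ n := by
    rw [← Real.rpow_mul_natCast hx, one_div_mul_eq_div]
    rfl
  refine ⟨(p / M) ^ ((1 : ℝ) / 13), by positivity, ?_, ?_, hpow 14, ?_⟩
  · rw [← hpow 14]
    refine (Real.lt_rpow_inv_iff_of_pos hx (by norm_num) (by norm_num)).1 ?_
    rwa [inv_div, div_lt_iff₀' hM]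
  · rw [← hpow 13, div_self (by norm_num), Real.rpow_one, mul_div_cancel₀ p hM.ne']
  · rw [← hpow 7, Real.div_rpow hp hM.le, ← div_le_iff₀ hΔ2]
    exact le_of_eq_of_le (by field_simp) hbad

lemma initial_policy_bounds (hM : 0 < M) (hM1 : M ≤ 1) (hMΔ : 20 * (M * (Δ1 + Δ2)) ≤ 1)
    (hΔ1 : 0 < Δ1) (hΔ2 : 0 < Δ2) (hp : 0 ≤ p)
    (hstar : p < M * (1 / 100) ^ ((13 : ℝ) / 14)) (hb0 : 0 < b)
    (hbad : 2 * p ^ ((7 : ℝ) / 13) / (Δ2 * M ^ ((7 : ℝ) / 13)) ≤ b) (hb1 : b ≤ 1 / 10) :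
    (p / M) ^ ((14 : ℝ) / 13) ≤ b * Δ2 - p * Δ1 ∧ p + b < 3 / 20 ∧
      p ^ 7 / b * (20 * (Δ1 + Δ2)) ^ 7 ≤ ((p / M) ^ ((14 : ℝ) / 13)) ^ 6 * Δ2 := by
  obtain ⟨u, hu0, hu, rfl, hγ, hb⟩ := exists_pow_of_initial_bounds hM hp hΔ2 hstar hbad
  rw [hγ]
  exact ⟨initial_gap_le hu0 hu (by linarith [mul_pos hM hΔ2]) hb,
    initial_star_add_bad_lt hu0 hu hM1 hb1, initial_ratio_le hu0 (by positivity) hMΔ hb0 hb⟩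

end InitialCondition

theorem monotonic_attraction_general {Y : Type*} [Fintype Y] {D : ℕ}
    {φ : Y → EuclideanSpace ℝ (Fin D)} (hφ : Orthonormal ℝ φ)
    {r : Y → ℝ} {ystar ymed ybad : Y} {Ybad : Finset Y}
    (hr : IsThreeLevelReward r ystar ymed ybad Ybad)
    {θt : ℝ → EuclideanSpace ℝ (Fin D)} {M γ tγ : ℝ}
    (hflow : ∀ t ∈ Set.Icc 0 tγ, HasDerivAt θt (gradient (expReward φ r) (θt t)) t)
    (hM : 0 < M) (hM1 : M ≤ 1) (hMΔ : 20 * (M * (r ystar - r ybad)) ≤ 1)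
    (hstar : policy φ (θt 0) ystar < M * (1 / 100) ^ ((13 : ℝ) / 14))
    (hbad : 2 * policy φ (θt 0) ystar ^ ((7 : ℝ) / 13) / ((r ymed - r ybad) * M ^ ((7 : ℝ) / 13))
      ≤ policyMass φ (θt 0) Ybad)
    (hbad1 : policyMass φ (θt 0) Ybad ≤ 1 / 10)
    (hγ : γ = (policy φ (θt 0) ystar / M) ^ ((14 : ℝ) / 13))
    (htγ : 0 ≤ tγ) (hreach : r ymed - γ ≤ expReward φ r (θt tγ))
    (hfirst : ∀ t, 0 ≤ t → r ymed - γ ≤ expReward φ r (θt t) → tγ ≤ t) :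
    (∀ t ∈ Set.Icc (0 : ℝ) tγ,
        (∃ d : ℝ, HasDerivAt (fun τ => policy φ (θt τ) ystar) d t ∧ d < 0)
        ∧ ∃ d : ℝ, HasDerivAt (fun τ => policy φ (θt τ) ymed) d t ∧ 0 < d)
    ∧ (∀ t ∈ Set.Icc (0 : ℝ) tγ, policy φ (θt tγ) ystar ≤ policy φ (θt t) ystar)
    ∧ policy φ (θt tγ) ystar
        ≤ policy φ (θt 0) ymed ^ 2 * γ / (8 * (r ystar - expReward φ r (θt 0))) := by
  have hp := (policy_pos φ (θt 0) ystar).le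
  rw [← sub_add_sub_cancel _ (r ymed)] at hMΔ
  obtain ⟨hgap, hmass, hratio⟩ := initial_policy_bounds hM hM1 hMΔ (sub_pos.2 hr.med_lt_star)
    (sub_pos.2 hr.bad_lt_med) hp hstar (hr.policyMass_bad_pos φ (θt 0)) hbad hbad1
  rw [← hγ, ← hr.advantage_med_eq] at hgap
  rw [← hγ, sub_add_sub_cancel] at hratio
  have hγ0 : 0 ≤ γ := hγ ▸ Real.rpow_nonneg (div_nonneg hp hM.le) _
  have hmed : 17 / 20 < policy φ (θt 0) ymed := by
    linarith [hr.policy_add_policy_add_policyMass φ (θt 0)]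
  exact monotonic_attraction_of_starBadRatio_le hφ hr hγ0 hflow (le_sub_comm.1 hgap) hmed hratio
    htγ hreach hfirst

lemma twenty_mul_min_one_div_mul_le {ρ S : ℝ} (hρ : 0 ≤ ρ) (hρ1 : ρ ≤ 1) (hS : 0 < S) :
    20 * (min 1 (0.05 * ρ ^ ((2 : ℝ) / 7) / S) * S) ≤ 1 := by
  have hscale : min 1 (0.05 * ρ ^ ((2 : ℝ) / 7) / S) * S ≤ 0.05 * ρ ^ ((2 : ℝ) / 7) :=
    (le_div_iff₀ hS).1 (min_le_right _ _)
  linarith [Real.rpow_le_one hρ hρ1 (by norm_num : (0 : ℝ) ≤ 2 / 7)]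

theorem monotonic_attraction {Y : Type*} [Fintype Y] {D : ℕ}
    (φ : Y → EuclideanSpace ℝ (Fin D)) (hφ : ∀ y, φ y ≠ 0)
    (horth : Orthonormal ℝ φ)
    (rG : Y → ℝ) (hrG : ∀ y, rG y ∈ Set.Icc (-1 : ℝ) 1)
    (ystar ymed ybad : Y) (Ybad : Finset Y) (hybad : ybad ∈ Ybad)
    (hsm : ystar ≠ ymed) (hsb : ystar ∉ Ybad) (hmb : ymed ∉ Ybad)
    (hcover : ∀ y : Y, y = ystar ∨ y = ymed ∨ y ∈ Ybad)
    (hr1 : rG ymed < rG ystar) (hr2 : 0 < rG ymed)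
    (hr3 : ∀ y ∈ Ybad, rG y ≤ 0)
    (hr4 : ∀ y ∈ Ybad, rG y = rG ybad)
    (Δ1 Δ2 : ℝ) (hΔ1 : Δ1 = rG ystar - rG ymed) (hΔ2 : Δ2 = rG ymed - rG ybad)
    (θt : ℝ → EuclideanSpace ℝ (Fin D))
    (hflow : ∀ t : ℝ, 0 ≤ t → HasDerivAt θt (gradient (expReward φ rG) (θt t)) t)
    (M : ℝ) (hM : M = min 1 (0.05 * rG ymed ^ ((2:ℝ)/7) / (Δ1 + Δ2)))
    (hinit1 : policy φ (θt 0) ystar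
        < M * (min 0.01 (min ((21 / (1100 * (Δ1 + Δ2))) ^ ((7:ℝ)/3)) (Δ2 ^ 2))) ^ ((13:ℝ)/14))
    (hinit2 : max (2 * policy φ (θt 0) ystar ^ ((7:ℝ)/13) / (Δ2 * M ^ ((7:ℝ)/13)))
        (0.05 * rG ymed) ≤ ∑ y ∈ Ybad, policy φ (θt 0) y)
    (hinit3 : ∑ y ∈ Ybad, policy φ (θt 0) y ≤ 0.1 * rG ymed)
    (γ : ℝ) (hγ : γ = (policy φ (θt 0) ystar / M) ^ ((14:ℝ)/13))
    (tγ : ℝ) (htγ0 : 0 ≤ tγ)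
    (htγ1 : rG ymed - γ ≤ expReward φ rG (θt tγ))
    (htγfirst : ∀ t : ℝ, 0 ≤ t → rG ymed - γ ≤ expReward φ rG (θt t) → tγ ≤ t) :
    (∀ t ∈ Set.Icc (0 : ℝ) tγ,
        (∃ d : ℝ, HasDerivAt (fun τ : ℝ => policy φ (θt τ) ystar) d t ∧ d < 0)
        ∧ ∃ d : ℝ, HasDerivAt (fun τ : ℝ => policy φ (θt τ) ymed) d t ∧ 0 < d)
    ∧ (∀ t ∈ Set.Icc (0 : ℝ) tγ, policy φ (θt tγ) ystar ≤ policy φ (θt t) ystar)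
    ∧ policy φ (θt tγ) ystar
        ≤ policy φ (θt 0) ymed ^ 2 * γ / (8 * (rG ystar - expReward φ rG (θt 0))) := by
  subst hΔ1 hΔ2
  rw [sub_add_sub_cancel] at hM hinit1
  have hr : IsThreeLevelReward rG ystar ymed ybad Ybad :=
    ⟨hybad, hsm, hsb, hmb, hcover, hr4, (hr3 ybad hybad).trans_lt hr2, hr1⟩
  have hΔ : 0 < rG ystar - rG ybad := sub_pos.2 (hr.bad_lt_med.trans hr1)
  have hM0 : 0 < M := hM ▸ by positivity
  have hMΔ : 20 * (M * (rG ystar - rG ybad)) ≤ 1 :=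
    hM ▸ twenty_mul_min_one_div_mul_le hr2.le (hrG ymed).2 hΔ
  have hmin : min 0.01 (min ((21 / (1100 * (rG ystar - rG ybad))) ^ ((7 : ℝ) / 3))
      ((rG ymed - rG ybad) ^ 2)) ≤ 1 / 100 := (min_le_left _ _).trans (by norm_num)
  have hbad1 : policyMass φ (θt 0) Ybad ≤ 1 / 10 := hinit3.trans (by linarith [(hrG ymed).2])
  have hstar : policy φ (θt 0) ystar < M * (1 / 100) ^ ((13 : ℝ) / 14) :=
    hinit1.trans_le (by gcongr)
  exact monotonic_attraction_general horth hr (fun t ht => hflow t ht.1) hM0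
    (hM ▸ min_le_left _ _) hMΔ hstar ((le_max_left _ _).trans hinit2) hbad1 hγ htγ0 htγ1 htγfirst
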